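/- For every n ≥ 3, the set of feasible weight vectors in ℙⁿ is finite. That is, there are only finitely many tuples L = (l₀,…,l_{n−2}) of non-negative integers such that a generic configuration of linear subspaces of weight L in ℙⁿ(ℂ) is maximally intersected by some rational normal curve. -/

import Mathlib

noncomputable section

/-- Projective space `ℙⁿ(ℂ)`, the projectivization of `ℂ^{n+1}`. -/
abbrev PP (k : ℕ) := Projectivization ℂ (Fin (k + 1) → ℂ)

/-- The vector of the monomials `s^k t^(n-k)`, used to parametrize rational normal curves. -/
def veron (n : ℕ) (v : Fin 2 → ℂ) : Fin (n + 1) → ℂ :=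
  fun k => v 0 ^ (k : ℕ) * v 1 ^ (n - (k : ℕ))

/-- `C ⊆ ℙⁿ` is a rational normal curve if it is the image of `[s:t] ↦ [F₀(s,t):⋯:Fₙ(s,t)]`
for a basis `F₀,…,Fₙ` of the degree-`n` binary forms; such a basis is encoded by an
invertible matrix of coefficients applied to the monomial vector `veron`. -/
def IsRNC (n : ℕ) (C : Set (PP n)) : Prop :=
  ∃ M : Matrix (Fin (n + 1)) (Fin (n + 1)) ℂ, IsUnit M.det ∧
    C = {P : PP n | ∃ v : Fin 2 → ℂ, v ≠ 0 ∧ ∃ c : ℂ, c ≠ 0 ∧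
      P.rep = c • M.mulVec (veron n v)}

/-- The linear subspace of `ℙⁿ` given as the projectivization of the column span of a matrix. -/
def projSet {n m : ℕ} (A : Matrix (Fin (n + 1)) (Fin m) ℂ) : Set (PP n) :=
  {P : PP n | P.rep ∈ Submodule.span ℂ (Set.range fun j => fun r => A r j)}

/-- A configuration of weight `L = (l₀,…,l_{n-2})`: for each `i`, `lᵢ` matrices of size
`(n+1) × (i+1)`, whose column spans give the `i`-dimensional components. -/
abbrev Config (n : ℕ) (L : Fin (n - 1) → ℕ) :=
  (i : Fin (n - 1)) → Fin (L i) → Matrix (Fin (n + 1)) (Fin (i.1 + 1)) ℂ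

/-- All matrices of the configuration have full rank. -/
def FullRank {n : ℕ} {L : Fin (n - 1) → ℕ} (A : Config n L) : Prop :=
  ∀ i j, (A i j).rank = i.1 + 1

/-- A curve `C` maximally intersects the configuration `A`: it meets every `i`-dimensional
component in exactly `i+1` distinct points. -/
def MaxIntersects {n : ℕ} {L : Fin (n - 1) → ℕ} (C : Set (PP n)) (A : Config n L) : Prop :=
  ∀ i j, (C ∩ projSet (A i j)).ncard = i.1 + 1

/-- A property `Q` holds for a generic configuration of weight `L`: there is a nonzero
polynomial in the matrix entries such that `Q` holds at every full-rank tuple of matrices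
where the polynomial does not vanish. -/
def GenHolds (n : ℕ) (L : Fin (n - 1) → ℕ) (Q : Config n L → Prop) : Prop :=
  ∃ F : MvPolynomial ((i : Fin (n - 1)) × (Fin (L i) × Fin (n + 1) × Fin (i.1 + 1))) ℂ,
    F ≠ 0 ∧ ∀ A : Config n L, FullRank A →
      MvPolynomial.eval (fun p => A p.1 p.2.1 p.2.2.1 p.2.2.2) F ≠ 0 → Q A

/-- `L` is feasible: a generic configuration of weight `L` is maximally intersected
by some rational normal curve. -/
def Feasible (n : ℕ) (L : Fin (n - 1) → ℕ) : Prop :=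
  GenHolds n L fun A => ∃ C : Set (PP n), IsRNC n C ∧ MaxIntersects C A

/-- `L` is non-feasible: for a generic configuration of weight `L`, no rational normal
curve maximally intersects it. -/
def NonFeasible (n : ℕ) (L : Fin (n - 1) → ℕ) : Prop :=
  GenHolds n L fun A => ¬ ∃ C : Set (PP n), IsRNC n C ∧ MaxIntersects C A



lemma exists_poly_relation {σ τ : Type} [Fintype σ] [Fintype τ]
    (h : Fintype.card σ < Fintype.card τ) (φ : τ → MvPolynomial σ ℂ) :
    ∃ P : MvPolynomial τ ℂ, P ≠ 0 ∧ MvPolynomial.aeval φ P = 0 := by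
  by_contra hcon
  push Not at hcon
  have hind : AlgebraicIndependent ℂ φ := by
    rw [algebraicIndependent_iff]
    intro p hp
    by_contra hne
    exact hcon p hne hp
  have h1 := hind.cardinalMk_le_trdeg
  rw [MvPolynomial.trdeg_of_isDomain] at h1
  simp at h1
  omega

lemma linIndep_veron (n m : ℕ) (hm : m ≤ n + 1) (c : ℂ) (t : Fin m → ℂ)
    (ht : Function.Injective t) :
    LinearIndependent ℂ (fun k => veron n ![t k, 1 + c * t k]) := by
  classical
  obtain ⟨S, hS, hcard⟩ := Infinite.exists_superset_card_eq (Finset.univ.image t) (n + 1)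
    (by rw [Finset.card_image_of_injective _ ht]; simpa using hm)
  let e : S ≃ Fin (n + 1) := S.equivFinOfCardEq hcard
  let u : Fin (n + 1) → ℂ := fun k => (e.symm k : ℂ)
  have hu : Function.Injective u := Subtype.val_injective.comp e.symm.injective
  have hdet : (Matrix.projVandermonde u (fun k => 1 + c * u k)).det ≠ 0 := by
    rw [Matrix.det_projVandermonde]
    refine Finset.prod_ne_zero_iff.2 fun i _ => Finset.prod_ne_zero_iff.2 fun j hj => ?_
    have : u j * (1 + c * u i) - u i * (1 + c * u j) = u j - u i := by ring
    rw [this, sub_ne_zero]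
    exact fun h => (Finset.mem_Ioi.1 hj).ne' (hu h)
  have hli := Matrix.linearIndependent_rows_of_det_ne_zero hdet
  have hmem : ∀ k, t k ∈ S := fun k => hS (Finset.mem_image_of_mem _ (Finset.mem_univ k))
  have hinj : Function.Injective (fun k => e ⟨t k, hmem k⟩) := by
    intro a b hab
    have := e.injective hab
    exact ht (by simpa using this)
  have hfun : (fun k => veron n ![t k, 1 + c * t k]) =
      (fun i => Matrix.projVandermonde u (fun k => 1 + c * u k) i) ∘
        (fun k => e ⟨t k, hmem k⟩) := by
    funext k r
    simp only [Function.comp, Matrix.projVandermonde_apply, veron, u,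
      Equiv.symm_apply_apply]
    simp [Fin.val_rev]
  rw [hfun]
  exact hli.comp _ hinj

lemma veron_smul (n : ℕ) (a : ℂ) (v : Fin 2 → ℂ) : veron n (a • v) = a ^ n • veron n v := by
  funext k
  simp only [veron, Pi.smul_apply, smul_eq_mul, mul_pow]
  have : a ^ n = a ^ (k : ℕ) * a ^ (n - (k : ℕ)) := by
    rw [← pow_add]; congr 1; have := k.2; omega
  rw [this]; ring

lemma points_of_ncard {n m : ℕ} (hm : 0 < m) (M : Matrix (Fin (n + 1)) (Fin (n + 1)) ℂ)
    (A : Matrix (Fin (n + 1)) (Fin m) ℂ)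
    (h : ({P : PP n | ∃ v : Fin 2 → ℂ, v ≠ 0 ∧ ∃ c : ℂ, c ≠ 0 ∧
      P.rep = c • M.mulVec (veron n v)} ∩ projSet A).ncard = m) :
    ∃ w : Fin m → (Fin 2 → ℂ), (∀ k, w k ≠ 0) ∧
      (∀ k l, k ≠ l → ∀ a : ℂ, w k ≠ a • w l) ∧
      ∀ k, M.mulVec (veron n (w k)) ∈
        Submodule.span ℂ (Set.range fun j => fun r => A r j) := by
  set S := {P : PP n | ∃ v : Fin 2 → ℂ, v ≠ 0 ∧ ∃ c : ℂ, c ≠ 0 ∧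
      P.rep = c • M.mulVec (veron n v)} ∩ projSet A with hS
  have hfin : S.Finite := Set.finite_of_ncard_ne_zero (by omega)
  have : Finite S := hfin
  have hcard : Nat.card S = m := h
  let e : S ≃ Fin m := Finite.equivFinOfCardEq hcard
  have key : ∀ P : S, ∃ v : Fin 2 → ℂ, v ≠ 0 ∧ ∃ c : ℂ, c ≠ 0 ∧
      P.1.rep = c • M.mulVec (veron n v) := fun P => P.2.1
  choose v hv c hc hrep using key
  refine ⟨fun k => v (e.symm k), fun k => hv _, ?_, ?_⟩
  · intro k l hkl a hka
    have ha : a ≠ 0 := by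
      rintro rfl
      exact hv (e.symm k) (by simpa using hka)
    simp only at hka
    apply hkl
    apply e.symm.injective
    apply Subtype.ext
    rw [← Projectivization.mk_rep (e.symm k).1, ← Projectivization.mk_rep (e.symm l).1,
      Projectivization.mk_eq_mk_iff']
    refine ⟨c (e.symm k) * a ^ n * (c (e.symm l))⁻¹, ?_⟩
    rw [hrep, hrep, hka, veron_smul, Matrix.mulVec_smul, smul_smul, smul_smul]
    congr 1
    field_simp [hc (e.symm l)]
  · intro k
    have h2 : (e.symm k).1.rep ∈ Submodule.span ℂ (Set.range fun j => fun r => A r j) :=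
      (e.symm k).2.2
    rw [hrep] at h2
    exact (Submodule.smul_mem_iff _ (hc _)).1 h2

lemma factor_of_points {n m : ℕ} (hm : m ≤ n + 1) (M : Matrix (Fin (n + 1)) (Fin (n + 1)) ℂ)
    (hM : IsUnit M.det) (A : Matrix (Fin (n + 1)) (Fin m) ℂ) (c : ℂ)
    (w : Fin m → (Fin 2 → ℂ))
    (hw : ∀ k l, k ≠ l → ∀ a : ℂ, w k ≠ a • w l)
    (hmem : ∀ k, M.mulVec (veron n (w k)) ∈
        Submodule.span ℂ (Set.range fun j => fun r => A r j))
    (hc : ∀ k, w k 1 - c * w k 0 ≠ 0) :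
    ∃ (t : Fin m → ℂ) (G : Fin m → Fin m → ℂ), ∀ r k,
      A r k = ∑ l, (∑ s : Fin (n + 1), M r s * (t l ^ (s : ℕ) * (1 + c * t l) ^ (n - (s : ℕ))))
        * G l k := by
  let d : Fin m → ℂ := fun k => (w k 1 - c * w k 0)⁻¹
  have hd : ∀ k, d k ≠ 0 := fun k => inv_ne_zero (hc k)
  let t : Fin m → ℂ := fun k => d k * w k 0
  have hvec : ∀ k, (![t k, 1 + c * t k] : Fin 2 → ℂ) = d k • w k := by
    intro k
    have h1 : d k * (w k 1 - c * w k 0) = 1 := inv_mul_cancel₀ (hc k)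
    funext i
    fin_cases i
    · simp [t]
    · simp only [t]
      simp
      linear_combination (-1 : ℂ) * h1
  have htinj : Function.Injective t := by
    intro k l hkl
    by_contra hne
    apply hw k l hne ((d k)⁻¹ * d l)
    have h1 : d k • w k = d l • w l := by rw [← hvec, ← hvec, hkl]
    rw [mul_smul, ← h1, smul_smul, inv_mul_cancel₀ (hd k), one_smul]
  have hli := linIndep_veron n m hm c t htinj
  have hMinj : Function.Injective M.mulVec :=
    Matrix.mulVec_injective_of_isUnit ((Matrix.isUnit_iff_isUnit_det M).2 hM)
  have hli2 : LinearIndependent ℂ (fun k => M.mulVec (veron n ![t k, 1 + c * t k])) :=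
    hli.map' M.mulVecLin (LinearMap.ker_eq_bot.2 hMinj)
  set V := Submodule.span ℂ (Set.range fun k => M.mulVec (veron n ![t k, 1 + c * t k])) with hV
  have hle : V ≤ Submodule.span ℂ (Set.range fun j => fun r => A r j) := by
    rw [hV, Submodule.span_le]
    rintro _ ⟨k, rfl⟩
    simp only [SetLike.mem_coe]
    rw [hvec, veron_smul, Matrix.mulVec_smul]
    exact Submodule.smul_mem _ _ (hmem k)
  have heq := Submodule.eq_of_le_of_finrank_le hle (by
    rw [hV, finrank_span_eq_card hli2]
    exact finrank_range_le_card _)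
  have hcol : ∀ k, ∃ g : Fin m → ℂ,
      ∑ l, g l • M.mulVec (veron n ![t l, 1 + c * t l]) = fun r => A r k := by
    intro k
    rw [← Submodule.mem_span_range_iff_exists_fun, ← hV, heq]
    exact Submodule.subset_span ⟨k, rfl⟩
  choose g hg using hcol
  refine ⟨t, fun l k => g k l, fun r k => ?_⟩
  have := congrFun (hg k) r
  rw [Finset.sum_apply] at this
  refine this.symm.trans ?_
  refine Finset.sum_congr rfl fun l _ => ?_
  simp only [Pi.smul_apply, smul_eq_mul]
  rw [mul_comm]
  congr 1

lemma exists_avoid {ι : Type} [Finite ι] (w : ι → (Fin 2 → ℂ)) (hw : ∀ k, w k ≠ 0) :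
    ∃ c : ℂ, ∀ k, w k 1 - c * w k 0 ≠ 0 := by
  obtain ⟨c, hc⟩ := (Set.finite_range (fun k => w k 1 / w k 0)).infinite_compl.nonempty
  refine ⟨c, fun k h => ?_⟩
  by_cases h0 : w k 0 = 0
  · apply hw k
    funext i
    fin_cases i
    · exact h0
    · simpa [h0] using h
  · apply hc
    refine ⟨k, ?_⟩
    simp only
    rw [div_eq_iff h0]
    linear_combination h

abbrev CIdx (n : ℕ) (L : Fin (n - 1) → ℕ) :=
  ((i : Fin (n - 1)) × (Fin (L i) × Fin (n + 1) × Fin (i.1 + 1)))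

abbrev PIdx (n : ℕ) (L : Fin (n - 1) → ℕ) :=
  (Fin (n + 1) × Fin (n + 1)) ⊕ (Unit ⊕
    ((i : Fin (n - 1)) × (Fin (L i) × (Fin (i.1 + 1) ⊕ (Fin (i.1 + 1) × Fin (i.1 + 1))))))

def phi (n : ℕ) (L : Fin (n - 1) → ℕ) (p : CIdx n L) : MvPolynomial (PIdx n L) ℂ :=
  ∑ l : Fin (p.1.1 + 1), (∑ s : Fin (n + 1),
      MvPolynomial.X (Sum.inl (p.2.2.1, s)) *
      (MvPolynomial.X (Sum.inr (Sum.inr ⟨p.1, p.2.1, Sum.inl l⟩)) ^ (s : ℕ) *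
        (1 + MvPolynomial.X (Sum.inr (Sum.inl ())) *
          MvPolynomial.X (Sum.inr (Sum.inr ⟨p.1, p.2.1, Sum.inl l⟩))) ^ (n - (s : ℕ)))) *
      MvPolynomial.X (Sum.inr (Sum.inr ⟨p.1, p.2.1, Sum.inr (l, p.2.2.2)⟩))

lemma image_of_max {n : ℕ} {L : Fin (n - 1) → ℕ} (A : Config n L)
    (h : ∃ C : Set (PP n), IsRNC n C ∧ MaxIntersects C A) :
    ∃ x : PIdx n L → ℂ, ∀ p : CIdx n L,
      A p.1 p.2.1 p.2.2.1 p.2.2.2 = MvPolynomial.eval x (phi n L p) := by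
  obtain ⟨C, ⟨M, hM, rfl⟩, hmax⟩ := h
  have key : ∀ (i : Fin (n - 1)) (j : Fin (L i)), ∃ w : Fin (i.1 + 1) → (Fin 2 → ℂ),
      (∀ k, w k ≠ 0) ∧ (∀ k l, k ≠ l → ∀ a : ℂ, w k ≠ a • w l) ∧
      ∀ k, M.mulVec (veron n (w k)) ∈
        Submodule.span ℂ (Set.range fun q => fun r => A i j r q) := fun i j => points_of_ncard (Nat.succ_pos i.1) M (A i j) (hmax i j)
  choose w hw0 hw hmem using key
  obtain ⟨c, hc⟩ := exists_avoid
    (ι := (i : Fin (n - 1)) × (Fin (L i) × Fin (i.1 + 1)))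
    (fun q => w q.1 q.2.1 q.2.2) (fun q => hw0 _ _ _)
  have key2 : ∀ (i : Fin (n - 1)) (j : Fin (L i)), ∃ (t : Fin (i.1 + 1) → ℂ)
      (G : Fin (i.1 + 1) → Fin (i.1 + 1) → ℂ), ∀ r k,
      A i j r k = ∑ l, (∑ s : Fin (n + 1),
        M r s * (t l ^ (s : ℕ) * (1 + c * t l) ^ (n - (s : ℕ)))) * G l k :=
    fun i j => factor_of_points (by have := i.2; omega) M hM (A i j) c (w i j)
    (hw i j) (hmem i j) (fun k => hc ⟨i, j, k⟩)
  choose t G htG using key2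
  refine ⟨Sum.elim (fun q => M q.1 q.2) (Sum.elim (fun _ => c) (fun q =>
    Sum.elim (fun l => t q.1 q.2.1 l) (fun g => G q.1 q.2.1 g.1 g.2) q.2.2)), ?_⟩
  rintro ⟨i, j, r, k⟩
  rw [htG]
  simp [phi]

def minorPoly (n : ℕ) (L : Fin (n - 1) → ℕ) (i : Fin (n - 1)) (j : Fin (L i)) :
    MvPolynomial (CIdx n L) ℂ :=
  Matrix.det (Matrix.of fun (a b : Fin (i.1 + 1)) =>
    MvPolynomial.X (⟨i, j, Fin.castLE (by have := i.2; omega) a, b⟩ : CIdx n L))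

lemma eval_minorPoly (n : ℕ) (L : Fin (n - 1) → ℕ) (i : Fin (n - 1)) (j : Fin (L i))
    (x : CIdx n L → ℂ) :
    MvPolynomial.eval x (minorPoly n L i j) = Matrix.det (Matrix.of fun (a b : Fin (i.1 + 1)) =>
      x ⟨i, j, Fin.castLE (by have := i.2; omega) a, b⟩) := by
  rw [minorPoly, RingHom.map_det]
  congr 1
  ext a b
  simp

lemma minorPoly_ne_zero (n : ℕ) (L : Fin (n - 1) → ℕ) (i : Fin (n - 1)) (j : Fin (L i)) :
    minorPoly n L i j ≠ 0 := by
  intro h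
  have h1 := eval_minorPoly n L i j (fun p => if (p.2.2.1 : ℕ) = (p.2.2.2 : ℕ) then 1 else 0)
  rw [h] at h1
  have h2 : (Matrix.of fun (a b : Fin (i.1 + 1)) =>
      (if (a : ℕ) = (b : ℕ) then (1 : ℂ) else 0)) = 1 := by
    ext a b
    simp [Matrix.one_apply, Fin.ext_iff]
  simp only [Fin.val_castLE] at h1
  rw [h2] at h1
  simp at h1

lemma bound_of_feasible {n : ℕ} {L : Fin (n - 1) → ℕ} (hL : Feasible n L) :
    Fintype.card (CIdx n L) ≤ Fintype.card (PIdx n L) := by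
  by_contra hlt
  push Not at hlt
  obtain ⟨P, hP, hrel⟩ := exists_poly_relation hlt (phi n L)
  obtain ⟨F, hF, hfeas⟩ := hL
  let D : MvPolynomial (CIdx n L) ℂ := ∏ i, ∏ j, minorPoly n L i j
  have hD : D ≠ 0 := Finset.prod_ne_zero_iff.2 fun i _ => Finset.prod_ne_zero_iff.2 fun j _ =>
    minorPoly_ne_zero n L i j
  have hne : F * P * D ≠ 0 := mul_ne_zero (mul_ne_zero hF hP) hD
  obtain ⟨x, hx⟩ : ∃ x, MvPolynomial.eval x (F * P * D) ≠ 0 := by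
    by_contra hcon
    push Not at hcon
    exact hne (MvPolynomial.funext fun x => by rw [hcon x, map_zero])
  rw [map_mul, map_mul] at hx
  have hxF := left_ne_zero_of_mul (left_ne_zero_of_mul hx)
  have hxP := right_ne_zero_of_mul (left_ne_zero_of_mul hx)
  have hxD := right_ne_zero_of_mul hx
  let A : Config n L := fun i j => Matrix.of fun r k => x ⟨i, j, r, k⟩
  have hrank : FullRank A := by
    intro i j
    have hm : MvPolynomial.eval x (minorPoly n L i j) ≠ 0 := by
      simp only [D, map_prod] at hxD
      exact Finset.prod_ne_zero_iff.1 (Finset.prod_ne_zero_iff.1 hxD i (Finset.mem_univ _)) j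
        (Finset.mem_univ _)
    rw [eval_minorPoly] at hm
    apply le_antisymm
    · simpa using (A i j).rank_le_width
    · have hr := Matrix.rank_of_isUnit _
        ((Matrix.isUnit_iff_isUnit_det _).2 (isUnit_iff_ne_zero.2 hm))
      rw [Fintype.card_fin] at hr
      have hi : i.1 + 1 ≤ n + 1 := by have := i.2; omega
      have hsub := Matrix.rank_submatrix_le (A i j) (Fin.castLE hi) (Equiv.refl _)
      refine le_trans (le_of_eq hr.symm) ?_
      exact hsub
  obtain ⟨y, hy⟩ := image_of_max A (hfeas A hrank hxF)
  apply hxP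
  have hxy : x = fun p => MvPolynomial.eval y (phi n L p) := by
    funext p
    exact hy p
  have h0 := congrArg (MvPolynomial.eval y) hrel
  rw [map_zero, MvPolynomial.aeval_def, MvPolynomial.hom_eval₂] at h0
  rw [hxy]
  rw [← h0, MvPolynomial.eval, MvPolynomial.coe_eval₂Hom]
  congr 1
  ext; simp

/-- There are only finitely many feasible weight vectors in `ℙⁿ`. -/
theorem finitely_many_feasible (n : ℕ) (hn : 3 ≤ n) :
    {L : Fin (n - 1) → ℕ | Feasible n L}.Finite := by
  apply (Set.finite_Iic (fun _ : Fin (n - 1) => (n + 1) * (n + 1) + 1)).subset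
  intro L hL i
  have hb := bound_of_feasible hL
  simp only [Fintype.card_sigma, Fintype.card_prod, Fintype.card_sum, Fintype.card_fin,
    Fintype.card_unit] at hb
  have hterm : ∀ k : Fin (n - 1), L k + L k * (k.1 + 1 + (k.1 + 1) * (k.1 + 1)) ≤
      L k * ((n + 1) * (k.1 + 1)) := by
    intro k
    have hk : k.1 + 2 ≤ n := by have := k.2; omega
    have : 1 + (k.1 + 1 + (k.1 + 1) * (k.1 + 1)) ≤ (n + 1) * (k.1 + 1) := by nlinarith
    calc _ = L k * (1 + (k.1 + 1 + (k.1 + 1) * (k.1 + 1))) := by ring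
      _ ≤ _ := Nat.mul_le_mul_left _ this
  have hsum := Finset.sum_le_sum (s := Finset.univ) fun k _ => hterm k
  rw [Finset.sum_add_distrib] at hsum
  have hi : L i ≤ ∑ k, L k := Finset.single_le_sum (fun _ _ => Nat.zero_le _) (Finset.mem_univ i)
  simp only
  omega

end
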